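/- Let A(x) = ∫_0^x 1/(1 − log(1−u)) du for x ∈ [0, 1). Then A(x) tends to the Euler–Gompertz constant G = ∫_0^∞ e^{−u}/(1+u) du as x → 1⁻, and moreover A(x) = G + (1−x)/log(1−x) + O((1−x)/(log(1−x))²) as x → 1⁻; i.e., there is a constant C such that |A(x) − G − (1−x)/log(1−x)| ≤ C·(1−x)/(log(1−x))² for all x sufficiently close to 1 from below. -/

import Mathlib

/-!
The substitution `u = 1 - e^{-t}` turns `A(x)` into `∫_0^T e^{-t}/(1+t) dt` with `T = -log(1-x)`,
and `T → ∞` as `x → 1⁻`, which gives the limit. The error `G - A(x)` is the tail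
`R(T) = ∫_T^∞ e^{-t}/(1+t) dt`, and it satisfies
`e^{-T}/(T+2) ≤ R(T) ≤ e^{-T}/T`: the upper bound uses `1/(1+t) ≤ 1/T` on the tail, and the lower
bound compares the integrand with the derivative of `-e^{-t}/(t+2)`. Since
`(1-x)/log(1-x) = -e^{-T}/T`, the remainder is at most
`e^{-T}/T - e^{-T}/(T+2) ≤ 2 e^{-T}/T²`.
-/

/-- The function `A(x) = ∫_0^x 1/(1 - log(1-u)) du`. -/
noncomputable def Afun (x : ℝ) : ℝ := ∫ u in (0 : ℝ)..x, 1 / (1 - Real.log (1 - u))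

/-- The Euler–Gompertz constant `G = ∫_0^∞ e^{-u}/(1+u) du ≈ 0.596347`. -/
noncomputable def gompertz : ℝ := ∫ u in Set.Ioi (0 : ℝ), Real.exp (-u) / (1 + u)

open Real Set Filter Topology MeasureTheory

lemma integrableOn_gompertz {T : ℝ} (hT : 0 ≤ T) :
    IntegrableOn (fun u : ℝ => exp (-u) / (1 + u)) (Ioi T) := by
  refine Integrable.mono' (integrableOn_exp_neg_Ioi T) ?_ ?_
  · exact (by fun_prop : Measurable fun u : ℝ => exp (-u) / (1 + u)).aestronglyMeasurable
  · refine (ae_restrict_iff' measurableSet_Ioi).2 (Eventually.of_forall fun u hu => ?_)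
    have hu' : T < u := hu
    have h1 : 0 < 1 + u := by linarith
    rw [Real.norm_of_nonneg (by positivity)]
    exact div_le_self (exp_pos _).le (by linarith)

lemma Afun_one_sub_exp {T : ℝ} (hT : 0 ≤ T) :
    Afun (1 - exp (-T)) = ∫ u in (0 : ℝ)..T, exp (-u) / (1 + u) := by
  have key := intervalIntegral.integral_comp_mul_deriv' (a := 0) (b := T)
    (f := fun t : ℝ => 1 - exp (-t)) (f' := fun t => exp (-t))
    (g := fun u => 1 / (1 - log (1 - u)))
    (fun t _ => by
      have := ((hasDerivAt_neg t).exp).const_sub 1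
      simpa using this)
    (by fun_prop)
    (by
      rintro _ ⟨t, ht, rfl⟩
      rw [uIcc_of_le hT] at ht
      have h1 : (1 : ℝ) - (1 - exp (-t)) = exp (-t) := by ring
      refine ContinuousAt.continuousWithinAt ?_
      have h2 : (1 : ℝ) - (1 - exp (-t)) ≠ 0 := by rw [h1]; exact (exp_pos _).ne'
      have h3 : 1 - log ((1 : ℝ) - (1 - exp (-t))) ≠ 0 := by
        rw [h1, log_exp]; linarith [ht.1]
      exact continuousAt_const.div
        (continuousAt_const.sub ((continuousAt_const.sub continuousAt_id).log h2)) h3)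
  simp only [neg_zero, exp_zero, sub_self] at key
  rw [Afun, ← key]
  refine intervalIntegral.integral_congr fun t _ => ?_
  simp only [Function.comp, sub_sub_cancel, log_exp]
  rw [sub_neg_eq_add]
  ring

lemma gompertz_sub_Afun {T : ℝ} (hT : 0 ≤ T) :
    gompertz - Afun (1 - exp (-T)) = ∫ u in Ioi T, exp (-u) / (1 + u) := by
  rw [Afun_one_sub_exp hT, gompertz, ← intervalIntegral.integral_Ioi_sub_Ioi
    (integrableOn_gompertz le_rfl) hT]
  ring

lemma tail_le {T : ℝ} (hT : 0 < T) :
    ∫ u in Ioi T, exp (-u) / (1 + u) ≤ exp (-T) / T := by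
  rw [← integral_exp_neg_Ioi T, ← integral_div]
  refine setIntegral_mono_on (integrableOn_gompertz hT.le)
    ((integrableOn_exp_neg_Ioi T).div_const T) measurableSet_Ioi fun u hu => ?_
  have hu' : T < u := hu
  gcongr
  linarith

lemma le_tail {T : ℝ} (hT : 0 < T) :
    exp (-T) / (T + 2) ≤ ∫ u in Ioi T, exp (-u) / (1 + u) := by
  have hd : ∀ u ∈ Ici T, HasDerivAt (fun u : ℝ => -(exp (-u) / (u + 2)))
      (exp (-u) * (u + 3) / (u + 2) ^ 2) u := by
    intro u hu
    have hu' : T ≤ u := hu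
    have h2 : u + 2 ≠ 0 := by linarith
    refine (((hasDerivAt_neg u).exp).fun_div ((hasDerivAt_id' u).add_const 2)
      h2).fun_neg.congr_deriv ?_
    field_simp
    ring
  have hpos : ∀ u ∈ Ioi T, 0 ≤ exp (-u) * (u + 3) / (u + 2) ^ 2 := by
    intro u hu
    have hu' : T < u := hu
    have : 0 < u + 3 := by linarith
    positivity
  have hlim : Tendsto (fun u : ℝ => -(exp (-u) / (u + 2))) atTop (𝓝 0) := by
    have h := (tendsto_exp_neg_atTop_nhds_zero).div_atTop
      (tendsto_atTop_add_const_right atTop (2 : ℝ) tendsto_id)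
    simpa using h.neg
  have hval := integral_Ioi_of_hasDerivAt_of_nonneg' hd hpos hlim
  rw [zero_sub, neg_neg] at hval
  rw [← hval]
  refine setIntegral_mono_on (integrableOn_Ioi_deriv_of_nonneg' hd hpos hlim)
    (integrableOn_gompertz hT.le) measurableSet_Ioi fun u hu => ?_
  have hu' : T < u := hu
  have h1 : 0 < 1 + u := by linarith
  have h2 : 0 < u + 2 := by linarith
  rw [div_le_div_iff₀ (by positivity) h1, mul_assoc]
  gcongr
  nlinarith

lemma tendsto_neg_log_one_sub :
    Tendsto (fun x : ℝ => -log (1 - x)) (𝓝[<] 1) atTop := by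
  refine tendsto_neg_atBot_atTop.comp (tendsto_log_nhdsGT_zero.comp ?_)
  refine tendsto_nhdsWithin_iff.2 ⟨?_, ?_⟩
  · have : Tendsto (fun x : ℝ => 1 - x) (𝓝 1) (𝓝 (1 - 1)) := by
      exact (continuous_const.sub continuous_id).tendsto 1
    rw [sub_self] at this
    exact this.mono_left nhdsWithin_le_nhds
  · filter_upwards [self_mem_nhdsWithin] with x hx
    exact sub_pos.2 (mem_Iio.1 hx)

/-- `A(x) → G` as `x → 1⁻`, and moreover
`A(x) = G + (1-x)/log(1-x) + O((1-x)/(log(1-x))²)` as `x → 1⁻`. -/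
theorem stmt18 :
    Filter.Tendsto Afun (nhdsWithin 1 (Set.Iio 1)) (nhds gompertz) ∧
    ∃ C : ℝ, ∀ᶠ x in nhdsWithin 1 (Set.Iio 1),
      |Afun x - gompertz - (1 - x) / Real.log (1 - x)|
        ≤ C * ((1 - x) / (Real.log (1 - x)) ^ 2) := by
  have hexp : ∀ x : ℝ, x < 1 → exp (-(-log (1 - x))) = 1 - x := fun x hx => by
    rw [neg_neg, exp_log (sub_pos.2 hx)]
  constructor
  · have h := (intervalIntegral_tendsto_integral_Ioi 0 (integrableOn_gompertz le_rfl)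
      tendsto_id).comp tendsto_neg_log_one_sub
    refine h.congr' ?_
    filter_upwards [self_mem_nhdsWithin, tendsto_neg_log_one_sub.eventually_gt_atTop 0]
      with x hx hT
    have := Afun_one_sub_exp hT.le
    rw [hexp x hx, sub_sub_cancel] at this
    exact this.symm
  · refine ⟨2, ?_⟩
    filter_upwards [self_mem_nhdsWithin, tendsto_neg_log_one_sub.eventually_gt_atTop 0]
      with x hx hT
    have h0 := gompertz_sub_Afun hT.le
    have h1 := tail_le hT
    have h2 := le_tail hT
    have hy : 0 < 1 - x := sub_pos.2 hx
    rw [← h0, hexp x hx, sub_sub_cancel] at h1 h2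
    obtain ⟨T, hTdef⟩ : ∃ T, T = -log (1 - x) := ⟨_, rfl⟩
    have hlog : log (1 - x) = -T := by rw [hTdef, neg_neg]
    rw [← hTdef] at h1 h2 hT
    rw [hlog, div_neg, neg_sq]
    have h3 : (1 - x) / T - (1 - x) / (T + 2) ≤ 2 * ((1 - x) / T ^ 2) := by
      have : 2 * ((1 - x) / T ^ 2) - ((1 - x) / T - (1 - x) / (T + 2))
          = 4 * (1 - x) / (T ^ 2 * (T + 2)) := by
        field_simp
        ring
      have h4 : 0 ≤ 4 * (1 - x) / (T ^ 2 * (T + 2)) := by positivity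
      linarith
    have h5 : 0 ≤ 2 * ((1 - x) / T ^ 2) := by positivity
    rw [abs_le]
    constructor <;> linarith
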